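/- Let (A, ×, 1) be a cartesian monoidal category. Any idempotent monad on A whose functor part preserves the terminal object 1 is right pre-Hopf as an opmonoidal monad (with respect to its canonical opmonoidal structure). -/

import Mathlib

open CategoryTheory CategoryTheory.Limits

/-- The first projection is an isomorphism when the second factor is terminal. -/
theorem isIso_fst_of_isIso_terminal {A : Type*} [Category A] [HasFiniteProducts A] (X Y : A)
    (h : IsIso (terminal.from Y)) : IsIso (prod.fst : X ⨯ Y ⟶ X) := by
  refine ⟨prod.lift (𝟙 X) (terminal.from X ≫ inv (terminal.from Y)), ?_, prod.lift_fst _ _⟩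
  apply Limits.prod.hom_ext
  · rw [Category.assoc, prod.lift_fst, Category.comp_id, Category.id_comp]
  · rw [← cancel_mono (terminal.from Y)]
    exact Subsingleton.elim _ _

/-- STATEMENT 19: any idempotent monad on a cartesian monoidal category whose functor
part preserves the terminal object is right pre-Hopf with respect to its canonical
opmonoidal structure, i.e. the right fusion operator
`H^r_{a,1} = (m_a × T(1)) ∘ ⟨T(p₁), T(p₂)⟩ : T(T(a) × 1) ⟶ T(a) × T(1)` is an
isomorphism for every object `a`. -/
theorem stmt_19 {A : Type*} [Category A] [HasFiniteProducts A]
    (T : CategoryTheory.Monad A)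
    (hidem : IsIso T.μ)
    (hpres : IsIso (terminal.from (T.obj (⊤_ A)))) :
    ∀ a : A,
      IsIso (prod.lift (T.map (prod.fst : T.obj a ⨯ (⊤_ A) ⟶ T.obj a))
          (T.map (prod.snd : T.obj a ⨯ (⊤_ A) ⟶ ⊤_ A)) ≫
        prod.map (T.μ.app a) (𝟙 (T.obj (⊤_ A)))) := by
  intro a
  have h1 := isIso_fst_of_isIso_terminal (T.obj a) (T.obj (⊤_ A)) hpres
  have h2 := isIso_fst_of_isIso_terminal (T.obj a) (⊤_ A)
    (by rw [Subsingleton.elim (terminal.from (⊤_ A)) (𝟙 _)]; infer_instance)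
  have h3 : IsIso (T.μ.app a) := inferInstance
  have h4 : IsIso (T.map (prod.fst : T.obj a ⨯ (⊤_ A) ⟶ T.obj a)) := inferInstance
  refine @IsIso.of_isIso_comp_right _ _ _ _ _ _ (prod.fst) h1 ?_
  rw [Category.assoc, prod.map_fst, prod.lift_fst_assoc]
  exact @IsIso.comp_isIso _ _ _ _ _ _ _ h4 h3
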